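/- arXiv:1812.05646 — 3 statements merged into one kernel-verified Lean document; each statement's English description precedes it below -/
import Mathlib

section
/- Let U ⊆ ℝ⁴ be open and let Γ : Fin 4 → Fin 4 → Fin 4 → (U → ℝ), written Γ^n_{bm}, be a family of smooth functions (connection coefficients, with one-form index b and matrix indices n, m). Define the curvature R^n_{m ab} = ∂_a Γ^n_{bm} − ∂_b Γ^n_{am} + Σ_l (Γ^n_{al} Γ^l_{bm} − Γ^n_{bl} Γ^l_{am}) and the Chern–Simons current K^a = Σ_{b,c,d} ε̃(a,b,c,d) Σ_{n,m} Γ^n_{bm} ( ∂_c Γ^m_{dn} + (2/3) Σ_l Γ^m_{cl} Γ^l_{dn} ). Then on all of U one has the Pontryagin identity Σ_a ∂_a K^a = (1/4) Σ_{a,b,c,d} ε̃(a,b,c,d) Σ_{n,m} R^n_{m ab} R^m_{n cd}, i.e. the Pontryagin density is the divergence of the Chern–Simons topological current. -/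
open scoped BigOperators

/-- The Levi-Civita symbol on `Fin 4`: the sign of the permutation sending
`(0,1,2,3)` to `(a,b,c,d)` when the four indices are distinct, and `0` otherwise. -/
noncomputable def leviCivita (a b c d : Fin 4) : ℝ :=
  ∑ σ : Equiv.Perm (Fin 4),
    if σ 0 = a ∧ σ 1 = b ∧ σ 2 = c ∧ σ 3 = d then ((Equiv.Perm.sign σ : ℤ) : ℝ) else 0

/-- Partial derivative of `f : (Fin 4 → ℝ) → ℝ` in the `a`-th coordinate direction. -/
noncomputable def pd (a : Fin 4) (f : (Fin 4 → ℝ) → ℝ) (x : Fin 4 → ℝ) : ℝ :=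
  fderiv ℝ f x (Pi.single a 1)

/-- The curvature `R^n_{m ab}` of the connection coefficients `Γ^n_{bm}`. -/
noncomputable def curv (Γ : Fin 4 → Fin 4 → Fin 4 → (Fin 4 → ℝ) → ℝ)
    (n m a b : Fin 4) (x : Fin 4 → ℝ) : ℝ :=
  pd a (Γ n b m) x - pd b (Γ n a m) x
    + ∑ l : Fin 4, (Γ n a l x * Γ l b m x - Γ n b l x * Γ l a m x)

/-- The Chern–Simons topological current
`K^a = ε̃(a,b,c,d) Γ^n_{bm} (∂_c Γ^m_{dn} + (2/3) Γ^m_{cl} Γ^l_{dn})`. -/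
noncomputable def csCurrent (Γ : Fin 4 → Fin 4 → Fin 4 → (Fin 4 → ℝ) → ℝ)
    (a : Fin 4) (x : Fin 4 → ℝ) : ℝ :=
  ∑ b : Fin 4, ∑ c : Fin 4, ∑ d : Fin 4, leviCivita a b c d *
    ∑ n : Fin 4, ∑ m : Fin 4,
      Γ n b m x * (pd c (Γ m d n) x + (2/3) * ∑ l : Fin 4, Γ m c l x * Γ l d n x)

/-!
Contracting a tensor with the Levi-Civita symbol is summing it over all permutations of its four
slots, weighted by sign; such a signed sum is multiplied by the sign of a permutation when the slots
are permuted. Write `⟨T⟩` for the signed sum, regard `Γ` as a matrix-valued one-form `A`, and let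
`F` be its curvature. Both `∂_a K^a` and a quarter of `⟨tr (F F)⟩` equal
`⟨tr (∂A ∂A)⟩ + 2 ⟨tr (∂A A A)⟩`:

* in the divergence, `⟨tr (A ∂∂A)⟩` vanishes by symmetry of second derivatives, while cyclicity of
  the trace and evenness of 3-cycles identify the three terms produced by the product rule from
  `tr (A A A)`, so that the coefficient becomes `3 * (2 / 3) = 2`;
* `F` is the antisymmetrisation of `∂A + A A`, whence `⟨tr (F F)⟩ = 4 ⟨tr ((∂A + A A) (∂A + A A))⟩`,
  and `⟨tr (A A A A)⟩` vanishes because the trace is cyclic and a 4-cycle is odd.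
-/

section SignedSum

open Equiv

variable {ι M : Type*} [Fintype ι] [DecidableEq ι] [AddCommGroup M]

/-- The sum of `f` over all permutations of `ι`, weighted by their signs. For `ι = Fin 4` this is
the contraction of a tensor `T` with the Levi-Civita symbol, where `f σ` stands for the component
`T (σ 0) (σ 1) (σ 2) (σ 3)`. -/
def signedSum (f : Perm ι → M) : M :=
  ∑ σ, Perm.sign σ • f σ

theorem signedSum_add (f g : Perm ι → M) :
    signedSum (fun σ => f σ + g σ) = signedSum f + signedSum g := by
  simp only [signedSum, smul_add, Finset.sum_add_distrib]

theorem signedSum_smul {R : Type*} [Monoid R] [DistribMulAction R M] (r : R) (f : Perm ι → M) :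
    signedSum (fun σ => r • f σ) = r • signedSum f := by
  simp only [signedSum, Finset.smul_sum, smul_comm r]

theorem signedSum_mul_right (τ : Perm ι) (f : Perm ι → M) :
    signedSum (fun σ => f (σ * τ)) = Perm.sign τ • signedSum f := by
  unfold signedSum
  rw [← Equiv.sum_comp (Equiv.mulRight τ) fun σ => Perm.sign σ • f σ, Finset.smul_sum]
  refine Finset.sum_congr rfl fun σ _ => ?_
  simp only [Equiv.coe_mulRight, Perm.sign_mul, smul_smul, mul_left_comm (Perm.sign τ),
    Int.units_mul_self, mul_one]

theorem signedSum_eq_of_even {τ : Perm ι} (hτ : Perm.sign τ = 1) {f g : Perm ι → M}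
    (h : ∀ σ, g σ = f (σ * τ)) : signedSum g = signedSum f := by
  rw [funext h, signedSum_mul_right, hτ, one_smul]

theorem signedSum_eq_neg_of_odd {τ : Perm ι} (hτ : Perm.sign τ = -1) {f g : Perm ι → M}
    (h : ∀ σ, g σ = f (σ * τ)) : signedSum g = -signedSum f := by
  rw [funext h, signedSum_mul_right, hτ, Units.neg_smul, one_smul]

theorem signedSum_eq_zero_of_odd [IsAddTorsionFree M] {τ : Perm ι} (hτ : Perm.sign τ = -1)
    {f : Perm ι → M} (h : ∀ σ, f σ = f (σ * τ)) : signedSum f = 0 :=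
  self_eq_neg.mp (signedSum_eq_neg_of_odd hτ h)

theorem signedSum_sub_of_odd {τ : Perm ι} (hτ : Perm.sign τ = -1) {f g : Perm ι → M}
    (h : ∀ σ, g σ = f σ - f (σ * τ)) : signedSum g = 2 • signedSum f := by
  have key := signedSum_eq_neg_of_odd hτ (f := f) fun _ => rfl
  simp only [signedSum] at key ⊢
  simp only [h, smul_sub, Finset.sum_sub_distrib, key, two_nsmul, sub_neg_eq_add]

theorem sum_leviCivita_mul (f : Fin 4 → Fin 4 → Fin 4 → Fin 4 → ℝ) :
    ∑ a, ∑ b, ∑ c, ∑ d, leviCivita a b c d * f a b c d =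
      signedSum fun σ : Perm (Fin 4) => f (σ 0) (σ 1) (σ 2) (σ 3) := by
  simp only [leviCivita, signedSum, Finset.sum_mul,
    Finset.sum_comm (t := (Finset.univ : Finset (Perm (Fin 4))))]
  refine Finset.sum_congr rfl fun σ _ => ?_
  simp only [ite_and, ite_mul, zero_mul, Finset.sum_ite_irrel, Finset.sum_const_zero,
    Finset.sum_ite_eq, Finset.mem_univ, if_true, Units.smul_def, zsmul_eq_mul]

end SignedSum

section TracialFunctional

open Equiv

variable {R M F : Type*} [Ring R] [AddCommGroup M] [FunLike F R M]

theorem signedSum_trace_mul_eq_zero_of_symm [IsAddTorsionFree M] (t : F) (A : Fin 4 → R)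
    {H : Fin 4 → Fin 4 → Fin 4 → R} (hH : ∀ a b c, H a b c = H b a c) :
    signedSum (fun σ : Perm (Fin 4) => t (A (σ 1) * H (σ 0) (σ 2) (σ 3))) = 0 :=
  signedSum_eq_zero_of_odd (τ := swap 0 2) (by decide) fun σ => by
    rw [hH]; rfl

theorem signedSum_trace_mul_mul_mul_eq_zero [IsAddTorsionFree M] {t : F}
    (ht : ∀ x y, t (x * y) = t (y * x)) (A : Fin 4 → R) :
    signedSum (fun σ : Perm (Fin 4) => t (A (σ 0) * A (σ 1) * (A (σ 2) * A (σ 3)))) = 0 :=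
  signedSum_eq_zero_of_odd (τ := finRotate 4) (by decide) fun σ => by
    rw [mul_assoc, ht]
    simp only [mul_assoc]
    rfl

variable [AddMonoidHomClass F R M]

theorem signedSum_trace_derivative_cubic {t : F} (ht : ∀ x y, t (x * y) = t (y * x))
    (A : Fin 4 → R) (D : Fin 4 → Fin 4 → R) :
    signedSum (fun σ : Perm (Fin 4) => t (D (σ 0) (σ 1) * (A (σ 2) * A (σ 3)) +
      A (σ 1) * (D (σ 0) (σ 2) * A (σ 3) + A (σ 2) * D (σ 0) (σ 3)))) =
      3 • signedSum fun σ : Perm (Fin 4) => t (D (σ 0) (σ 1) * (A (σ 2) * A (σ 3))) := by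
  have middle : signedSum (fun σ : Perm (Fin 4) => t (A (σ 1) * (D (σ 0) (σ 2) * A (σ 3)))) =
      signedSum fun σ : Perm (Fin 4) => t (D (σ 0) (σ 1) * (A (σ 2) * A (σ 3))) :=
    signedSum_eq_of_even (τ := swap 1 2 * swap 2 3) (by decide) fun σ => by
      rw [ht, mul_assoc]; rfl
  have last : signedSum (fun σ : Perm (Fin 4) => t (A (σ 1) * (A (σ 2) * D (σ 0) (σ 3)))) =
      signedSum fun σ : Perm (Fin 4) => t (D (σ 0) (σ 1) * (A (σ 2) * A (σ 3))) :=
    signedSum_eq_of_even (τ := swap 1 3 * swap 2 3) (by decide) fun σ => by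
      rw [← mul_assoc, ht]; rfl
  simp only [mul_add, map_add, signedSum_add, middle, last]
  abel

theorem signedSum_trace_add_mul_self [IsAddTorsionFree M] {t : F}
    (ht : ∀ x y, t (x * y) = t (y * x)) (A : Fin 4 → R) (D : Fin 4 → Fin 4 → R) :
    signedSum (fun σ : Perm (Fin 4) => t ((D (σ 0) (σ 1) + A (σ 0) * A (σ 1)) *
      (D (σ 2) (σ 3) + A (σ 2) * A (σ 3)))) =
      signedSum (fun σ : Perm (Fin 4) => t (D (σ 0) (σ 1) * D (σ 2) (σ 3))) +
        2 • signedSum fun σ : Perm (Fin 4) => t (D (σ 0) (σ 1) * (A (σ 2) * A (σ 3))) := by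
  have cross : signedSum (fun σ : Perm (Fin 4) => t (A (σ 0) * A (σ 1) * D (σ 2) (σ 3))) =
      signedSum fun σ : Perm (Fin 4) => t (D (σ 0) (σ 1) * (A (σ 2) * A (σ 3))) :=
    signedSum_eq_of_even (τ := swap 0 2 * swap 1 3) (by decide) fun σ => by
      rw [ht]; rfl
  simp only [add_mul, mul_add, map_add, signedSum_add, cross,
    signedSum_trace_mul_mul_mul_eq_zero ht]
  abel

theorem signedSum_map_antisymm_mul_antisymm (t : F) (E : Fin 4 → Fin 4 → R) :
    signedSum (fun σ : Perm (Fin 4) => t ((E (σ 0) (σ 1) - E (σ 1) (σ 0)) *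
      (E (σ 2) (σ 3) - E (σ 3) (σ 2)))) =
      4 • signedSum fun σ : Perm (Fin 4) => t (E (σ 0) (σ 1) * E (σ 2) (σ 3)) := by
  have first : signedSum (fun σ : Perm (Fin 4) =>
      t ((E (σ 0) (σ 1) - E (σ 1) (σ 0)) * E (σ 2) (σ 3))) =
      2 • signedSum fun σ : Perm (Fin 4) => t (E (σ 0) (σ 1) * E (σ 2) (σ 3)) :=
    signedSum_sub_of_odd (τ := swap 0 1) (by decide) fun σ => by
      rw [sub_mul, map_sub]; rfl
  have second : signedSum (fun σ : Perm (Fin 4) =>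
      t ((E (σ 0) (σ 1) - E (σ 1) (σ 0)) * (E (σ 2) (σ 3) - E (σ 3) (σ 2)))) =
      2 • signedSum fun σ : Perm (Fin 4) =>
        t ((E (σ 0) (σ 1) - E (σ 1) (σ 0)) * E (σ 2) (σ 3)) :=
    signedSum_sub_of_odd (τ := swap 2 3) (by decide) fun σ => by
      rw [mul_sub, map_sub]; rfl
  rw [second, first, smul_smul]
  norm_num

theorem signedSum_trace_curvature_mul_curvature [IsAddTorsionFree M] {t : F}
    (ht : ∀ x y, t (x * y) = t (y * x)) (A : Fin 4 → R) (D : Fin 4 → Fin 4 → R) :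
    signedSum (fun σ : Perm (Fin 4) => t (
      (D (σ 0) (σ 1) - D (σ 1) (σ 0) + ⁅A (σ 0), A (σ 1)⁆) *
      (D (σ 2) (σ 3) - D (σ 3) (σ 2) + ⁅A (σ 2), A (σ 3)⁆))) =
      4 • (signedSum (fun σ : Perm (Fin 4) => t (D (σ 0) (σ 1) * D (σ 2) (σ 3))) +
        2 • signedSum fun σ : Perm (Fin 4) => t (D (σ 0) (σ 1) * (A (σ 2) * A (σ 3)))) := by
  have antisymm (a b : Fin 4) : D a b - D b a + ⁅A a, A b⁆ =
      (D a b + A a * A b) - (D b a + A b * A a) := by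
    rw [Ring.lie_def]; abel
  simp only [antisymm]
  rw [signedSum_map_antisymm_mul_antisymm t fun a b => D a b + A a * A b,
    signedSum_trace_add_mul_self ht]

end TracialFunctional

open Equiv in
theorem signedSum_trace_derivative_chernSimons {𝕜 R M F : Type*} [Field 𝕜] [CharZero 𝕜] [Ring R]
    [Algebra 𝕜 R] [AddCommGroup M] [Module 𝕜 M] [FunLike F R M] [LinearMapClass F 𝕜 R M] {t : F}
    (ht : ∀ x y, t (x * y) = t (y * x)) (A : Fin 4 → R) (D : Fin 4 → Fin 4 → R)
    {H : Fin 4 → Fin 4 → Fin 4 → R} (hH : ∀ a b c, H a b c = H b a c) :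
    signedSum (fun σ : Perm (Fin 4) => t (
      D (σ 0) (σ 1) * (D (σ 2) (σ 3) + (2 / 3 : 𝕜) • (A (σ 2) * A (σ 3))) +
      A (σ 1) * (H (σ 0) (σ 2) (σ 3) +
        (2 / 3 : 𝕜) • (D (σ 0) (σ 2) * A (σ 3) + A (σ 2) * D (σ 0) (σ 3))))) =
      signedSum (fun σ : Perm (Fin 4) => t (D (σ 0) (σ 1) * D (σ 2) (σ 3))) +
        2 • signedSum fun σ : Perm (Fin 4) => t (D (σ 0) (σ 1) * (A (σ 2) * A (σ 3))) := by
  have : IsAddTorsionFree M := .of_isTorsionFree 𝕜 M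
  have expand (p q r u v w : R) :
      t (p * (q + (2 / 3 : 𝕜) • r) + u * (v + (2 / 3 : 𝕜) • w)) =
        t (p * q) + t (u * v) + (2 / 3 : 𝕜) • t (p * r + u * w) := by
    simp only [mul_add, mul_smul_comm, map_add, map_smul, smul_add]
    abel
  simp only [expand, signedSum_add, signedSum_smul, signedSum_trace_mul_eq_zero_of_symm t A hH,
    signedSum_trace_derivative_cubic ht]
  module

section SecondDerivative

variable {E F : Type*} [NormedAddCommGroup E] [NormedSpace ℝ E] [NormedAddCommGroup F]
  [NormedSpace ℝ F] {f : E → F} {x : E}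

theorem differentiableAt_fderiv (hf : ContDiffAt ℝ 2 f x) : DifferentiableAt ℝ (fderiv ℝ f) x :=
  (hf.fderiv_right (m := 1) (by norm_num)).differentiableAt one_ne_zero

theorem fderiv_fderiv_apply_comm (hf : ContDiffAt ℝ 2 f x) (v w : E) :
    fderiv ℝ (fun y => fderiv ℝ f y w) x v = fderiv ℝ (fun y => fderiv ℝ f y v) x w := by
  have second_derivative (v w : E) :
      fderiv ℝ (fun y => fderiv ℝ f y w) x v = fderiv ℝ (fderiv ℝ f) x v w := by
    rw [fderiv_clm_apply (differentiableAt_fderiv hf) (differentiableAt_const w)]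
    simp
  rw [second_derivative, second_derivative]
  exact hf.isSymmSndFDerivAt (by simp) v w

end SecondDerivative

section Connection

variable {E 𝔸 : Type*} [NormedAddCommGroup E] [NormedSpace ℝ E] [NormedRing 𝔸] [NormedAlgebra ℝ 𝔸]

/-- The curvature `∂_a A_b - ∂_b A_a + [A_a, A_b]` of the algebra-valued connection one-form `A`,
where `∂_a` is the derivative along the constant vector field `e a`. -/
noncomputable def connectionCurvature (e : Fin 4 → E) (A : Fin 4 → E → 𝔸) (a b : Fin 4) (x : E) :
    𝔸 :=
  fderiv ℝ (A b) x (e a) - fderiv ℝ (A a) x (e b) + ⁅A a x, A b x⁆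

/-- The Chern–Simons term `t (A_b (∂_c A_d + (2/3) A_c A_d))` before contraction with the
Levi-Civita symbol; the functional `t` plays the role of the trace. -/
noncomputable def chernSimonsTerm (t : 𝔸 →L[ℝ] ℝ) (e : Fin 4 → E) (A : Fin 4 → E → 𝔸)
    (b c d : Fin 4) (x : E) : ℝ :=
  t (A b x * (fderiv ℝ (A d) x (e c) + (2 / 3 : ℝ) • (A c x * A d x)))

/-- The Chern–Simons current of an algebra-valued connection one-form `A`. -/
noncomputable def chernSimonsCurrent (t : 𝔸 →L[ℝ] ℝ) (e : Fin 4 → E) (A : Fin 4 → E → 𝔸)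
    (a : Fin 4) (x : E) : ℝ :=
  ∑ b, ∑ c, ∑ d, leviCivita a b c d * chernSimonsTerm t e A b c d x

variable {A : Fin 4 → E → 𝔸} {x : E}

theorem differentiableAt_chernSimonsTerm (t : 𝔸 →L[ℝ] ℝ) (e : Fin 4 → E)
    (hA : ∀ a, ContDiffAt ℝ 2 (A a) x) (b c d : Fin 4) :
    DifferentiableAt ℝ (chernSimonsTerm t e A b c d) x := by
  have hdiff (a : Fin 4) : DifferentiableAt ℝ (A a) x := (hA a).differentiableAt two_ne_zero
  exact t.differentiableAt.comp x ((hdiff b).mul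
    (((differentiableAt_fderiv (hA d)).clm_apply (differentiableAt_const (e c))).add
      (((hdiff c).mul (hdiff d)).const_smul (2 / 3 : ℝ))))

theorem fderiv_chernSimonsTerm_apply (t : 𝔸 →L[ℝ] ℝ) (e : Fin 4 → E)
    (hA : ∀ a, ContDiffAt ℝ 2 (A a) x) (b c d : Fin 4) (v : E) :
    fderiv ℝ (chernSimonsTerm t e A b c d) x v = t (
      fderiv ℝ (A b) x v * (fderiv ℝ (A d) x (e c) + (2 / 3 : ℝ) • (A c x * A d x)) +
      A b x * (fderiv ℝ (fun y => fderiv ℝ (A d) y (e c)) x v +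
        (2 / 3 : ℝ) • (fderiv ℝ (A c) x v * A d x + A c x * fderiv ℝ (A d) x v))) := by
  have hderiv (a : Fin 4) : HasFDerivAt (A a) (fderiv ℝ (A a) x) x :=
    ((hA a).differentiableAt two_ne_zero).hasFDerivAt
  have product_rule := t.hasFDerivAt.comp x ((hderiv b).mul'
    (((differentiableAt_fderiv (hA d)).clm_apply (differentiableAt_const (e c))).hasFDerivAt.add
      (((hderiv c).mul' (hderiv d)).const_smul (2 / 3 : ℝ))))
  rw [add_comm (_ * (_ + _)), add_comm (fderiv ℝ (A c) x v * _)]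
  exact congrArg (· v) product_rule.fderiv

theorem fderiv_chernSimonsCurrent_apply (t : 𝔸 →L[ℝ] ℝ) (e : Fin 4 → E)
    (hA : ∀ a, ContDiffAt ℝ 2 (A a) x) (a : Fin 4) (v : E) :
    fderiv ℝ (chernSimonsCurrent t e A a) x v =
      ∑ b, ∑ c, ∑ d, leviCivita a b c d * fderiv ℝ (chernSimonsTerm t e A b c d) x v := by
  have hasFDerivAt_current : HasFDerivAt (chernSimonsCurrent t e A a)
      (∑ b, ∑ c, ∑ d, leviCivita a b c d • fderiv ℝ (chernSimonsTerm t e A b c d) x) x :=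
    .fun_sum fun b _ => .fun_sum fun c _ => .fun_sum fun d _ =>
      (differentiableAt_chernSimonsTerm t e hA b c d).hasFDerivAt.const_mul _
  simp only [hasFDerivAt_current.fderiv, sum_apply, smul_apply, smul_eq_mul]

theorem sum_fderiv_chernSimonsCurrent {t : 𝔸 →L[ℝ] ℝ} (ht : ∀ x y, t (x * y) = t (y * x))
    (e : Fin 4 → E) (hA : ∀ a, ContDiffAt ℝ 2 (A a) x) :
    ∑ a, fderiv ℝ (chernSimonsCurrent t e A a) x (e a) =
      (1 / 4) * ∑ a, ∑ b, ∑ c, ∑ d, leviCivita a b c d *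
        t (connectionCurvature e A a b x * connectionCurvature e A c d x) := by
  simp only [fderiv_chernSimonsCurrent_apply t e hA, fderiv_chernSimonsTerm_apply t e hA,
    connectionCurvature, sum_leviCivita_mul]
  rw [signedSum_trace_derivative_chernSimons ht (fun a => A a x)
      (fun a b => fderiv ℝ (A b) x (e a))
      (H := fun a b c => fderiv ℝ (fun y => fderiv ℝ (A c) y (e b)) x (e a))
      fun a b c => fderiv_fderiv_apply_comm (hA c) (e a) (e b),
    signedSum_trace_curvature_mul_curvature ht (fun a => A a x)
      fun a b => fderiv ℝ (A b) x (e a), nsmul_eq_mul]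
  ring

end Connection

section MatrixCalculus

open scoped Matrix.Norms.Operator

variable {E m n : Type*} [NormedAddCommGroup E] [NormedSpace ℝ E]

theorem contDiffAt_matrix [Fintype m] [Fintype n] {k : WithTop ℕ∞} {B : E → Matrix m n ℝ} {x : E}
    (hB : ∀ i j, ContDiffAt ℝ k (fun y => B y i j) x) : ContDiffAt ℝ k B x :=
  (Matrix.ofLinearEquiv (m := m) (n := n) (α := ℝ) ℝ).toContinuousLinearEquiv.contDiff.contDiffAt
    |>.comp x (contDiffAt_pi' fun i => contDiffAt_pi' fun j => hB i j)

variable [Finite m] [Finite n] {B : E → Matrix m n ℝ} {x : E}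

theorem differentiableAt_matrix (hB : ∀ i j, DifferentiableAt ℝ (fun y => B y i j) x) :
    DifferentiableAt ℝ B x := by
  cases nonempty_fintype m
  cases nonempty_fintype n
  exact (Matrix.ofLinearEquiv (m := m) (n := n) (α := ℝ) ℝ).toContinuousLinearEquiv.differentiableAt
    |>.comp x (differentiableAt_pi'' fun i => differentiableAt_pi'' fun j => hB i j)

theorem fderiv_matrix_apply (hB : DifferentiableAt ℝ B x) (v : E) (i : m) (j : n) :
    fderiv ℝ B x v i j = fderiv ℝ (fun y => B y i j) x v := by
  cases nonempty_fintype m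
  cases nonempty_fintype n
  exact (congrArg (· v) ((Matrix.entryLinearMap ℝ ℝ i j).toContinuousLinearMap.hasFDerivAt.comp x
    hB.hasFDerivAt).fderiv).symm

end MatrixCalculus

section ConnectionCoefficients

open scoped Matrix.Norms.Operator

/-- The matrix-valued one-form whose `b`-th component has the connection coefficient `Γ^n_{bm}` in
row `n` and column `m`. -/
def connectionMatrix (Γ : Fin 4 → Fin 4 → Fin 4 → (Fin 4 → ℝ) → ℝ) (b : Fin 4) (x : Fin 4 → ℝ) :
    Matrix (Fin 4) (Fin 4) ℝ :=
  .of fun n m => Γ n b m x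

variable {Γ : Fin 4 → Fin 4 → Fin 4 → (Fin 4 → ℝ) → ℝ} {x : Fin 4 → ℝ}

theorem contDiffAt_connectionMatrix {k : WithTop ℕ∞} (hΓ : ∀ n b m, ContDiffAt ℝ k (Γ n b m) x)
    (b : Fin 4) : ContDiffAt ℝ k (connectionMatrix Γ b) x :=
  contDiffAt_matrix fun n m => hΓ n b m

theorem fderiv_connectionMatrix_apply (hΓ : ∀ n b m, DifferentiableAt ℝ (Γ n b m) x)
    (a b n m : Fin 4) :
    fderiv ℝ (connectionMatrix Γ b) x (Pi.single a 1) n m = pd a (Γ n b m) x :=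
  fderiv_matrix_apply (differentiableAt_matrix fun n m => hΓ n b m) _ n m

theorem connectionCurvature_connectionMatrix_apply (hΓ : ∀ n b m, DifferentiableAt ℝ (Γ n b m) x)
    (a b n m : Fin 4) :
    connectionCurvature (fun i => Pi.single i 1) (connectionMatrix Γ) a b x n m =
      curv Γ n m a b x := by
  simp only [curv, ← fderiv_connectionMatrix_apply hΓ, Finset.sum_sub_distrib]
  rfl

theorem chernSimonsCurrent_connectionMatrix (hΓ : ∀ n b m, DifferentiableAt ℝ (Γ n b m) x)
    (a : Fin 4) :
    chernSimonsCurrent (Matrix.traceLinearMap (Fin 4) ℝ ℝ).toContinuousLinearMap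
      (fun i => Pi.single i 1) (connectionMatrix Γ) a x = csCurrent Γ a x := by
  simp only [csCurrent, ← fderiv_connectionMatrix_apply hΓ]
  rfl

theorem pontryagin_density_is_divergence_of_cs_current_general
    (hΓ : ∀ n b m, ContDiffAt ℝ 2 (Γ n b m) x) :
    ∑ a, pd a (csCurrent Γ a) x =
      (1 / 4) * ∑ a, ∑ b, ∑ c, ∑ d, leviCivita a b c d *
        ∑ n, ∑ m, curv Γ n m a b x * curv Γ m n c d x := by
  let trace := (Matrix.traceLinearMap (Fin 4) ℝ ℝ).toContinuousLinearMap
  have current_eventuallyEq (a : Fin 4) : csCurrent Γ a =ᶠ[nhds x]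
      chernSimonsCurrent trace (fun i => Pi.single i 1) (connectionMatrix Γ) a := by
    have hΓ_near : ∀ᶠ y in nhds x, ∀ n b m, ContDiffAt ℝ 2 (Γ n b m) y := by
      simp only [Filter.eventually_all]
      exact fun n b m => (hΓ n b m).eventually (by simp)
    filter_upwards [hΓ_near] with y hy
    exact (chernSimonsCurrent_connectionMatrix
      (fun n b m => (hy n b m).differentiableAt two_ne_zero) a).symm
  have trace_curvature (a b c d : Fin 4) :
      trace (connectionCurvature (fun i => Pi.single i 1) (connectionMatrix Γ) a b x *
        connectionCurvature (fun i => Pi.single i 1) (connectionMatrix Γ) c d x) =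
      ∑ n, ∑ m, curv Γ n m a b x * curv Γ m n c d x := by
    have hdiff (n b m : Fin 4) : DifferentiableAt ℝ (Γ n b m) x :=
      (hΓ n b m).differentiableAt two_ne_zero
    simp only [← connectionCurvature_connectionMatrix_apply hdiff]
    rfl
  simp only [← trace_curvature, pd, (current_eventuallyEq _).fderiv_eq]
  exact sum_fderiv_chernSimonsCurrent (fun B C => Matrix.trace_mul_comm B C) _
    (contDiffAt_connectionMatrix hΓ)

end ConnectionCoefficients

/-- The Pontryagin density is the divergence of the Chern–Simons topological current. -/
theorem pontryagin_density_is_divergence_of_cs_current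
    (U : Set (Fin 4 → ℝ)) (hU : IsOpen U)
    (Γ : Fin 4 → Fin 4 → Fin 4 → (Fin 4 → ℝ) → ℝ)
    (hΓ : ∀ n b m : Fin 4, ContDiffOn ℝ (⊤ : ℕ∞) (Γ n b m) U) :
    ∀ x ∈ U,
      ∑ a : Fin 4, pd a (csCurrent Γ a) x
        = (1/4) * ∑ a : Fin 4, ∑ b : Fin 4, ∑ c : Fin 4, ∑ d : Fin 4,
            leviCivita a b c d *
              ∑ n : Fin 4, ∑ m : Fin 4, curv Γ n m a b x * curv Γ m n c d x := by
  intro x hx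
  exact pontryagin_density_is_divergence_of_cs_current_general fun n b m =>
    ((hΓ n b m).contDiffAt (hU.mem_nhds hx)).of_le (WithTop.coe_le_coe.2 le_top)
end

section
/- Let f : EuclideanSpace ℝ (Fin 3) → ℝ be smooth on the complement of the origin and homogeneous of degree zero (f(t • x) = f(x) for all t > 0, x ≠ 0), and set u(x) = f(x)/‖x‖ for x ≠ 0. If ‖x‖³ · (Δu)(x) → 0 as ‖x‖ → ∞, then f is constant on the complement of the origin. -/
/-!
Work in dimension `n + 2` with `u = f / ‖x‖ⁿ`. Since `‖x‖⁻ⁿ` is harmonic away from the origin and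
its gradient is radial, whereas `∇f` is orthogonal to `x`, one has `Δu = Δf / ‖x‖ⁿ`. The function
`‖x‖² Δf` is constant on rays, so it vanishes as soon as it tends to `0` at infinity: `f` is
harmonic. For a radial cutoff `η` supported away from the origin, `∇η` is orthogonal to `∇f`, hence
`div (η f ∇f) = η ‖∇f‖²`, and the divergence theorem forces `∇f = 0`. The complement of the origin
is connected, so `f` is constant there.
-/

open scoped BigOperators

/-- The Euclidean Laplacian on `ℝ³`: the sum of the second partial derivatives in the
directions of the standard orthonormal basis. -/
noncomputable def lap (g : EuclideanSpace ℝ (Fin 3) → ℝ) (x : EuclideanSpace ℝ (Fin 3)) : ℝ :=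
  ∑ i : Fin 3,
    fderiv ℝ (fun y => fderiv ℝ g y (EuclideanSpace.single i 1)) x (EuclideanSpace.single i 1)

open Filter MeasureTheory Module Metric
open scoped ContDiff Gradient InnerProductSpace Laplacian Topology

section Divergence

variable {E : Type*} [NormedAddCommGroup E] [NormedSpace ℝ E]

/-- The divergence of a vector field on a normed space, defined without coordinates as the trace of
its Fréchet derivative (so it is `0` where the field is not differentiable, or if the space is
infinite-dimensional). -/
noncomputable def divergence (V : E → E) (x : E) : ℝ :=
  LinearMap.trace ℝ E (fderiv ℝ V x)

variable {V W : E → E} {x : E}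

lemma divergence_congr (h : V =ᶠ[𝓝 x] W) : divergence V x = divergence W x := by
  rw [divergence, h.fderiv_eq, divergence]

lemma divergence_add (hV : DifferentiableAt ℝ V x) (hW : DifferentiableAt ℝ W x) :
    divergence (fun y => V y + W y) x = divergence V x + divergence W x := by
  simp [divergence, fderiv_fun_add hV hW]

lemma divergence_id [FiniteDimensional ℝ E] (x : E) :
    divergence (fun y => y) x = finrank ℝ E := by
  simp [divergence, LinearMap.trace_id]

lemma divergence_smul [FiniteDimensional ℝ E] {a : E → ℝ} (ha : DifferentiableAt ℝ a x)
    (hV : DifferentiableAt ℝ V x) :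
    divergence (fun y => a y • V y) x = a x * divergence V x + fderiv ℝ a x (V x) := by
  simp [divergence, fderiv_fun_smul ha hV, ContinuousLinearMap.coe_smulRight]

lemma divergence_comp_smul (V : E → E) (t : ℝ) (x : E) :
    divergence (fun y => t • V (t • y)) x = t ^ 2 * divergence V (t • x) := by
  have h : fderiv ℝ (fun y => t • V (t • y)) x = (t ^ 2) • fderiv ℝ V (t • x) := by
    rw [sq, mul_smul, ← fderiv_comp_smul]
    exact congrFun (fderiv_const_smul_field t) x
  simp [divergence, h]

end Divergence

lemma contDiff_of_tsupport {𝕜 E F : Type*} [NontriviallyNormedField 𝕜] [NormedAddCommGroup E]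
    [NormedSpace 𝕜 E] [NormedAddCommGroup F] [NormedSpace 𝕜 F] {f : E → F} {n : WithTop ℕ∞}
    (hf : ∀ x ∈ tsupport f, ContDiffAt 𝕜 n f x) : ContDiff 𝕜 n f := by
  refine contDiff_iff_contDiffAt.2 fun x => ?_
  by_cases hx : x ∈ tsupport f
  · exact hf x hx
  · exact contDiffAt_const.congr_of_eventuallyEq (notMem_tsupport_iff_eventuallyEq.1 hx)

lemma integral_fderiv_eq_zero {E F : Type*} [NormedAddCommGroup E] [NormedSpace ℝ E]
    [FiniteDimensional ℝ E] [MeasurableSpace E] [BorelSpace E] (μ : Measure E) [μ.IsAddHaarMeasure]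
    [NormedAddCommGroup F] [NormedSpace ℝ F] {V : E → F} (hV : ContDiff ℝ 1 V)
    (hsupp : HasCompactSupport V) : ∫ x, fderiv ℝ V x ∂μ = 0 := by
  have hint : Integrable (fderiv ℝ V) μ :=
    (hV.continuous_fderiv one_ne_zero).integrable_of_hasCompactSupport (hsupp.fderiv ℝ)
  ext v
  rw [ContinuousLinearMap.integral_apply hint]
  simpa using integral_smul_fderiv_eq_neg_fderiv_smul_of_integrable (μ := μ) (v := v)
    (f := fun _ => (1 : ℝ)) (g := V) (by simp) (by simpa using hint.apply_continuousLinearMap v)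
    (by simpa using hV.continuous.integrable_of_hasCompactSupport hsupp)
    (fun x _ => differentiableAt_const _) (fun x _ => hV.differentiable one_ne_zero x)

theorem integral_divergence_eq_zero {E : Type*} [NormedAddCommGroup E] [NormedSpace ℝ E]
    [FiniteDimensional ℝ E] [MeasurableSpace E] [BorelSpace E] (μ : Measure E)
    [μ.IsAddHaarMeasure] {V : E → E} (hV : ContDiff ℝ 1 V) (hsupp : HasCompactSupport V) :
    ∫ x, divergence V x ∂μ = 0 := by
  have hint : Integrable (fderiv ℝ V) μ :=
    (hV.continuous_fderiv one_ne_zero).integrable_of_hasCompactSupport (hsupp.fderiv ℝ)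
  let tr : (E →L[ℝ] E) →L[ℝ] ℝ :=
    (LinearMap.trace ℝ E ∘ₗ ContinuousLinearMap.coeLM ℝ).toContinuousLinearMap
  calc ∫ x, divergence V x ∂μ = tr (∫ x, fderiv ℝ V x ∂μ) := tr.integral_comp_comm hint
    _ = 0 := by rw [integral_fderiv_eq_zero μ hV hsupp, map_zero]

/-- A function is constant on rays if it is homogeneous of degree zero, that is, invariant under
all dilations `x ↦ t • x` with `t > 0`; no regularity or value at the origin is imposed. -/
def IsConstantOnRays {E F : Type*} [AddCommGroup E] [Module ℝ E] (f : E → F) : Prop :=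
  ∀ t : ℝ, 0 < t → ∀ x, f (t • x) = f x

lemma IsConstantOnRays.eq_of_tendsto_cobounded {E F : Type*} [NormedAddCommGroup E]
    [NormedSpace ℝ E] [TopologicalSpace F] [T2Space F] {h : E → F} (hh : IsConstantOnRays h) {c : F}
    (hlim : Tendsto h (Bornology.cobounded E) (𝓝 c)) {x : E} (hx : x ≠ 0) : h x = c := by
  have hray : Tendsto (fun t : ℝ => t • x) atTop (Bornology.cobounded E) := by
    rw [← tendsto_norm_atTop_iff_cobounded]
    simpa [norm_smul] using tendsto_abs_atTop_atTop.atTop_mul_const (norm_pos_iff.2 hx)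
  refine tendsto_nhds_unique (tendsto_const_nhds.congr' ?_) (hlim.comp hray)
  filter_upwards [eventually_gt_atTop 0] with t ht using (hh t ht x).symm

lemma hasFDerivAt_norm {E : Type*} [NormedAddCommGroup E] [InnerProductSpace ℝ E] {x : E}
    (hx : x ≠ 0) : HasFDerivAt (fun y : E => ‖y‖) (‖x‖⁻¹ • innerSL ℝ x) x := by
  have hsqrt := (hasStrictFDerivAt_norm_sq x).hasFDerivAt.sqrt (by simpa using hx)
  simp only [Real.sqrt_sq (norm_nonneg _)] at hsqrt
  convert hsqrt using 1
  module

section Gradient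

variable {E : Type*} [NormedAddCommGroup E] [InnerProductSpace ℝ E] [CompleteSpace E]
variable {f g : E → ℝ} {x : E}

lemma gradient_mul (hf : DifferentiableAt ℝ f x) (hg : DifferentiableAt ℝ g x) :
    ∇ (fun y => f y * g y) x = f x • ∇ g x + g x • ∇ f x := by
  simp [gradient, fderiv_fun_mul hf hg]

lemma gradient_comp_smul (f : E → ℝ) (t : ℝ) (x : E) :
    ∇ (fun y => f (t • y)) x = t • ∇ f (t • x) := by
  simp [gradient, fderiv_comp_smul]

lemma contDiffAt_gradient (hf : ContDiffAt ℝ 2 f x) : ContDiffAt ℝ 1 (∇ f) x :=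
  (InnerProductSpace.toDual ℝ E).symm.toContinuousLinearEquiv.contDiff.contDiffAt.comp x
    (hf.fderiv_right (m := 1) one_add_one_eq_two.le)

lemma hasGradientAt_comp_norm {φ : ℝ → ℝ} {φ' : ℝ} (hx : x ≠ 0) (hφ : HasDerivAt φ φ' ‖x‖) :
    HasGradientAt (fun y => φ ‖y‖) ((φ' / ‖x‖) • x) x := by
  refine (hφ.comp_hasFDerivAt x (hasFDerivAt_norm hx)).congr_fderiv ?_
  ext v
  simp [div_eq_mul_inv, mul_assoc]

lemma gradient_norm_rpow (p : ℝ) (hx : x ≠ 0) :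
    ∇ (fun y : E => ‖y‖ ^ p) x = (p * ‖x‖ ^ (p - 2)) • x := by
  have hn : 0 < ‖x‖ := norm_pos_iff.2 hx
  rw [(hasGradientAt_comp_norm hx (Real.hasDerivAt_rpow_const (.inl hn.ne'))).gradient,
    mul_div_assoc, ← Real.rpow_sub_one hn.ne']
  ring_nf

lemma IsConstantOnRays.inner_gradient_self (hf : IsConstantOnRays f) (hd : DifferentiableAt ℝ f x) :
    ⟪∇ f x, x⟫_ℝ = 0 := by
  rw [inner_gradient_left]
  have hray : HasDerivAt (fun t : ℝ => t • x) x 1 := by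
    simpa using (hasDerivAt_id (1 : ℝ)).smul_const x
  have hcomp : HasDerivAt (fun t : ℝ => f (t • x)) (fderiv ℝ f x x) 1 :=
    HasFDerivAt.comp_hasDerivAt (f := fun t : ℝ => t • x) 1 (by simpa using hd.hasFDerivAt) hray
  refine hcomp.unique ((hasDerivAt_const 1 (f x)).congr_of_eventuallyEq ?_)
  filter_upwards [lt_mem_nhds one_pos] with t ht using hf t ht x

end Gradient

lemma contDiffAt_norm_rpow {E : Type*} [NormedAddCommGroup E] [InnerProductSpace ℝ E] {x : E}
    (p : ℝ) (hx : x ≠ 0) {k : WithTop ℕ∞} : ContDiffAt ℝ k (fun y : E => ‖y‖ ^ p) x :=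
  (contDiffAt_norm ℝ hx).rpow_const_of_ne (norm_ne_zero_iff.2 hx)

section Laplacian

variable {E : Type*} [NormedAddCommGroup E] [InnerProductSpace ℝ E] [FiniteDimensional ℝ E]
variable {f g : E → ℝ} {x : E}

lemma laplacian_eq_divergence_gradient (f : E → ℝ) (x : E) : Δ f x = divergence (∇ f) x := by
  let b := stdOrthonormalBasis ℝ E
  have h (v : E) :
      fderiv ℝ (∇ f) x v = (InnerProductSpace.toDual ℝ E).symm (fderiv ℝ (fderiv ℝ f) x v) :=
    DFunLike.congr_fun
      (InnerProductSpace.toDual ℝ E).symm.toContinuousLinearEquiv.comp_fderiv v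
  rw [divergence, LinearMap.trace_eq_sum_inner _ b,
    InnerProductSpace.laplacian_eq_iteratedFDeriv_orthonormalBasis f b]
  simp [iteratedFDeriv_two_apply, h, ← real_inner_comm (b _)]

lemma laplacian_comp_smul (f : E → ℝ) (t : ℝ) (x : E) :
    Δ (fun y => f (t • y)) x = t ^ 2 * Δ f (t • x) := by
  simp only [laplacian_eq_divergence_gradient, ← divergence_comp_smul]
  rw [funext (gradient_comp_smul f t)]

lemma laplacian_mul (hf : ContDiffAt ℝ 2 f x) (hg : ContDiffAt ℝ 2 g x) :
    Δ (fun y => f y * g y) x = f x * Δ g x + 2 * ⟪∇ f x, ∇ g x⟫_ℝ + g x * Δ f x := by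
  have hgrad : ∇ (fun y => f y * g y) =ᶠ[𝓝 x] fun y => f y • ∇ g y + g y • ∇ f y := by
    filter_upwards [hf.eventually (by simp), hg.eventually (by simp)] with y hfy hgy
    exact gradient_mul (hfy.differentiableAt two_ne_zero) (hgy.differentiableAt two_ne_zero)
  have hdf := hf.differentiableAt two_ne_zero
  have hdg := hg.differentiableAt two_ne_zero
  have hddf := (contDiffAt_gradient hf).differentiableAt one_ne_zero
  have hddg := (contDiffAt_gradient hg).differentiableAt one_ne_zero
  simp only [laplacian_eq_divergence_gradient, divergence_congr hgrad,
    divergence_add (hdf.fun_smul hddg) (hdg.fun_smul hddf), divergence_smul hdf hddg,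
    divergence_smul hdg hddf, ← inner_gradient_left]
  rw [real_inner_comm (∇ f x) (∇ g x)]
  ring

lemma laplacian_norm_rpow (p : ℝ) (hx : x ≠ 0) :
    Δ (fun y : E => ‖y‖ ^ p) x = p * (p - 2 + finrank ℝ E) * ‖x‖ ^ (p - 2) := by
  have hgrad : ∇ (fun y : E => ‖y‖ ^ p) =ᶠ[𝓝 x] fun y => (p * ‖y‖ ^ (p - 2)) • y := by
    filter_upwards [eventually_ne_nhds hx] with y hy using gradient_norm_rpow p hy
  have hd : DifferentiableAt ℝ (fun y : E => ‖y‖ ^ (p - 2)) x :=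
    (contDiffAt_norm_rpow _ hx).differentiableAt one_ne_zero
  have hpow : ‖x‖ ^ (p - 2 - 2) * ‖x‖ ^ 2 = ‖x‖ ^ (p - 2) := by
    rw [← Real.rpow_add_natCast (norm_ne_zero_iff.2 hx)]
    simp
  rw [laplacian_eq_divergence_gradient, divergence_congr hgrad,
    divergence_smul (hd.const_mul p) differentiableAt_fun_id, divergence_id, fderiv_const_mul hd,
    smul_apply, ← inner_gradient_left, gradient_norm_rpow _ hx,
    real_inner_smul_left, real_inner_self_eq_norm_sq, ← hpow, smul_eq_mul]
  ring

lemma exists_radial_bump {p : E} (hp : p ≠ 0) : ∃ η : E → ℝ, ContDiff ℝ ∞ η ∧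
    HasCompactSupport η ∧ 0 ∉ tsupport η ∧ 0 ≤ η ∧ η p ≠ 0 ∧ ∀ x ≠ 0, ∃ c : ℝ, ∇ η x = c • x := by
  have hn : 0 < ‖p‖ := norm_pos_iff.2 hp
  let φ : ContDiffBump ‖p‖ := ⟨‖p‖ / 3, ‖p‖ / 2, by positivity, by linarith⟩
  have hsupp : tsupport (fun x : E => φ ‖x‖) ⊆ norm ⁻¹' closedBall ‖p‖ (‖p‖ / 2) :=
    φ.tsupport_eq ▸ tsupport_comp_subset_preimage φ continuous_norm
  have hzero : (0 : E) ∉ tsupport (fun x : E => φ ‖x‖) := fun h => by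
    have := hsupp h
    simp only [Set.mem_preimage, norm_zero, mem_closedBall, dist_zero_left, norm_norm] at this
    linarith
  refine ⟨fun x => φ ‖x‖, contDiff_of_tsupport fun x hx => ?_, ?_, hzero, fun x => φ.nonneg, ?_,
    fun x hx => ⟨_, (hasGradientAt_comp_norm hx
      (φ.contDiff.differentiable one_ne_zero _).hasDerivAt).gradient⟩⟩
  · exact φ.contDiff.contDiffAt.comp x (contDiffAt_norm ℝ (ne_of_mem_of_not_mem hx hzero))
  · refine (isCompact_closedBall (0 : E) (3 / 2 * ‖p‖)).of_isClosed_subset (isClosed_tsupport _)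
      fun x hx => ?_
    have := hsupp hx
    rw [Set.mem_preimage, mem_closedBall, Real.dist_eq, abs_le] at this
    rw [mem_closedBall_zero_iff]
    linarith
  · exact (φ.pos_of_mem_ball (mem_ball_self φ.rOut_pos)).ne'

lemma integral_mul_norm_gradient_sq_eq_zero [MeasurableSpace E] [BorelSpace E] (μ : Measure E)
    [μ.IsAddHaarMeasure] {η : E → ℝ} (hη : ContDiff ℝ 1 η) (hsupp : HasCompactSupport η)
    (hf : ∀ x ∈ tsupport η, ContDiffAt ℝ 2 f x) (hharm : ∀ x ∈ tsupport η, Δ f x = 0)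
    (horth : ∀ x ∈ tsupport η, ⟪∇ η x, ∇ f x⟫_ℝ = 0) :
    ∫ x, η x * ‖∇ f x‖ ^ 2 ∂μ = 0 := by
  let V : E → E := fun x => η x • f x • ∇ f x
  have hVsupp : tsupport V ⊆ tsupport η := tsupport_smul_subset_left η _
  have hV : ContDiff ℝ 1 V := contDiff_of_tsupport fun x hx =>
    hη.contDiffAt.smul (((hf x (hVsupp hx)).of_le one_le_two).smul
      (contDiffAt_gradient (hf x (hVsupp hx))))
  have hdiv (x : E) : divergence V x = η x * ‖∇ f x‖ ^ 2 := by
    by_cases hx : x ∈ tsupport η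
    · have hdη := hη.differentiable one_ne_zero x
      have hdf := (hf x hx).differentiableAt two_ne_zero
      have hddf := (contDiffAt_gradient (hf x hx)).differentiableAt one_ne_zero
      rw [divergence_smul hdη (hdf.fun_smul hddf), divergence_smul hdf hddf,
        ← laplacian_eq_divergence_gradient, hharm x hx, map_smul, ← inner_gradient_left,
        ← inner_gradient_left, horth x hx, real_inner_self_eq_norm_sq]
      simp
    · have hVzero : V =ᶠ[𝓝 x] fun _ => 0 :=
        notMem_tsupport_iff_eventuallyEq.1 fun h => hx (hVsupp h)
      rw [divergence_congr hVzero, image_eq_zero_of_notMem_tsupport hx]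
      simp [divergence]
  simpa only [hdiv] using integral_divergence_eq_zero μ hV hsupp.smul_right

lemma IsConstantOnRays.norm_sq_mul_laplacian (hf : IsConstantOnRays f) :
    IsConstantOnRays fun x => ‖x‖ ^ 2 * Δ f x := by
  intro t ht x
  have h : (fun y => f (t • y)) = f := funext (hf t ht)
  beta_reduce
  rw [norm_smul, Real.norm_of_nonneg ht.le, mul_pow, mul_right_comm, ← laplacian_comp_smul, h,
    mul_comm]

lemma IsConstantOnRays.laplacian_norm_rpow_mul (hf : IsConstantOnRays f) (p : ℝ) (hx : x ≠ 0)
    (hfx : ContDiffAt ℝ 2 f x) :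
    Δ (fun y => ‖y‖ ^ p * f y) x =
      ‖x‖ ^ p * Δ f x + p * (p - 2 + finrank ℝ E) * ‖x‖ ^ (p - 2) * f x := by
  rw [laplacian_mul (contDiffAt_norm_rpow p hx) hfx, gradient_norm_rpow p hx,
    laplacian_norm_rpow p hx, real_inner_smul_left, real_inner_comm,
    hf.inner_gradient_self (hfx.differentiableAt two_ne_zero)]
  ring

lemma IsConstantOnRays.laplacian_div_norm_pow (hf : IsConstantOnRays f) {n : ℕ}
    (hn : finrank ℝ E = n + 2) (hx : x ≠ 0) (hfx : ContDiffAt ℝ 2 f x) :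
    Δ (fun y => f y / ‖y‖ ^ n) x = Δ f x / ‖x‖ ^ n := by
  have h (a : ℝ) (y : E) : a / ‖y‖ ^ n = ‖y‖ ^ (-n : ℝ) * a := by
    rw [Real.rpow_neg (norm_nonneg y), Real.rpow_natCast, inv_mul_eq_div]
  simp only [h, hf.laplacian_norm_rpow_mul _ hx hfx, hn]
  push_cast
  ring

theorem IsConstantOnRays.gradient_eq_zero_of_laplacian_eq_zero (hf : IsConstantOnRays f)
    (hsmooth : ∀ x ≠ 0, ContDiffAt ℝ 2 f x) (hharm : ∀ x ≠ 0, Δ f x = 0) (hx : x ≠ 0) :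
    ∇ f x = 0 := by
  borelize E
  obtain ⟨η, hη, hsupp, hzero, hnonneg, hηx, hradial⟩ := exists_radial_bump hx
  have hne {y : E} (hy : y ∈ tsupport η) : y ≠ 0 := ne_of_mem_of_not_mem hy hzero
  have hint : ∫ y, η y * ‖∇ f y‖ ^ 2 = 0 := by
    refine integral_mul_norm_gradient_sq_eq_zero volume (hη.of_le (by simp)) hsupp
      (fun y hy => hsmooth y (hne hy)) (fun y hy => hharm y (hne hy)) fun y hy => ?_
    obtain ⟨c, hc⟩ := hradial y (hne hy)
    rw [hc, real_inner_smul_left, real_inner_comm,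
      hf.inner_gradient_self ((hsmooth y (hne hy)).differentiableAt two_ne_zero), mul_zero]
  have hcont : Continuous fun y => η y * ‖∇ f y‖ ^ 2 :=
    continuous_of_tsupport fun y hy =>
      have hy0 : y ≠ 0 := hne (tsupport_mul_subset_left hy)
      hη.continuous.continuousAt.mul
        ((contDiffAt_gradient (hsmooth y hy0)).continuousAt.norm.pow 2)
  by_contra hgrad
  exact (hcont.integral_pos_of_hasCompactSupport_nonneg_nonzero hsupp.mul_right
    (fun y => mul_nonneg (hnonneg y) (by positivity))
    (mul_ne_zero hηx (pow_ne_zero 2 (norm_ne_zero_iff.2 hgrad)))).ne' hint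

theorem angular_part_of_decaying_field_is_constant_general {n : ℕ} (hn : finrank ℝ E = n + 2)
    (hsmooth : ContDiffOn ℝ 2 f {0}ᶜ) (hf : IsConstantOnRays f)
    (hdecay : Tendsto (fun x => ‖x‖ ^ (n + 2) * Δ (fun y => f y / ‖y‖ ^ n) x)
      (Bornology.cobounded E) (𝓝 0)) :
    ∀ x y : E, x ≠ 0 → y ≠ 0 → f x = f y := by
  have hat (x : E) (hx : x ≠ 0) : ContDiffAt ℝ 2 f x :=
    hsmooth.contDiffAt (isOpen_compl_singleton.mem_nhds hx)
  have hlim : Tendsto (fun x => ‖x‖ ^ 2 * Δ f x) (Bornology.cobounded E) (𝓝 0) := by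
    refine hdecay.congr' ?_
    filter_upwards [Bornology.eventually_ne_cobounded 0] with x hx
    have : ‖x‖ ≠ 0 := norm_ne_zero_iff.2 hx
    rw [hf.laplacian_div_norm_pow hn hx (hat x hx)]
    field_simp
    ring
  have hharm (x : E) (hx : x ≠ 0) : Δ f x = 0 := by
    simpa [hx] using hf.norm_sq_mul_laplacian.eq_of_tendsto_cobounded hlim hx
  have hrank : 1 < Module.rank ℝ E := by
    rw [← finrank_eq_rank, hn]
    norm_cast
    omega
  intro x y hx hy
  refine isOpen_compl_singleton.is_const_of_fderiv_eq_zero (𝕜 := ℝ)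
    (isConnected_compl_singleton_of_one_lt_rank hrank 0).isPreconnected
    (hsmooth.differentiableOn two_ne_zero) (fun z hz => ?_) hx hy
  rw [← toDual_gradient, hf.gradient_eq_zero_of_laplacian_eq_zero hat hharm hz, map_zero,
    Pi.zero_apply]

end Laplacian

lemma lap_eq_laplacian {g : EuclideanSpace ℝ (Fin 3) → ℝ} {x : EuclideanSpace ℝ (Fin 3)}
    (hg : ContDiffAt ℝ 2 g x) : lap g x = Δ g x := by
  have hd : DifferentiableAt ℝ (fderiv ℝ g) x :=
    (hg.fderiv_right (m := 1) one_add_one_eq_two.le).differentiableAt one_ne_zero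
  rw [InnerProductSpace.laplacian_eq_iteratedFDeriv_orthonormalBasis g
    (EuclideanSpace.basisFun (Fin 3) ℝ)]
  simp [lap, iteratedFDeriv_two_apply, fderiv_clm_apply hd (differentiableAt_const _)]

/-- If `f` is smooth away from the origin, homogeneous of degree zero, and
`u(x) = f(x)/‖x‖` satisfies `‖x‖³ Δu(x) → 0` as `‖x‖ → ∞`, then `f` is constant on the
complement of the origin. -/
theorem angular_part_of_decaying_field_is_constant
    (f : EuclideanSpace ℝ (Fin 3) → ℝ)
    (hf : ContDiffOn ℝ (⊤ : ℕ∞) f {(0 : EuclideanSpace ℝ (Fin 3))}ᶜ)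
    (hhom : ∀ t : ℝ, 0 < t → ∀ x : EuclideanSpace ℝ (Fin 3), x ≠ 0 → f (t • x) = f x)
    (hdecay : Filter.Tendsto
      (fun x : EuclideanSpace ℝ (Fin 3) => ‖x‖ ^ 3 * lap (fun y => f y / ‖y‖) x)
      (Filter.comap (fun x : EuclideanSpace ℝ (Fin 3) => ‖x‖) Filter.atTop) (nhds 0)) :
    ∀ x y : EuclideanSpace ℝ (Fin 3), x ≠ 0 → y ≠ 0 → f x = f y := by
  have hf2 : ContDiffOn ℝ 2 f {0}ᶜ := hf.of_le (WithTop.coe_le_coe.2 le_top)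
  have hrays : IsConstantOnRays f := fun t ht x => by
    rcases eq_or_ne x 0 with rfl | hx
    · rw [smul_zero]
    · exact hhom t ht x hx
  refine angular_part_of_decaying_field_is_constant_general (n := 1) (by simp) hf2 hrays ?_
  rw [comap_norm_atTop] at hdecay
  refine hdecay.congr' ?_
  filter_upwards [Bornology.eventually_ne_cobounded 0] with x hx
  have hu : ContDiffAt ℝ 2 (fun y => f y / ‖y‖) x :=
    (hf2.contDiffAt (isOpen_compl_singleton.mem_nhds hx)).div (contDiffAt_norm ℝ hx)
      (norm_ne_zero_iff.2 hx)
  simp only [pow_one, lap_eq_laplacian hu]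
end

section
/- Let f : EuclideanSpace ℝ (Fin 3) → ℝ be smooth on the complement of the origin, homogeneous of degree zero (f(t • x) = f(x) for all t > 0, x ≠ 0), and harmonic on the complement of the origin, i.e. Δf(x) = 0 for all x ≠ 0. Then f is constant. -/
open scoped BigOperators

/-!
A function that is homogeneous of degree zero takes on `E \ {0}` exactly the values it takes on the
unit sphere, so by compactness it attains its maximum over the open set `E \ {0}`. This set is
connected when `dim E ≥ 2`, and E. Hopf's strong maximum principle says that a subharmonic function
attaining its maximum on a connected open set is constant.

For the strong maximum principle, suppose that `f` is not constantly equal to its maximum. Some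
closed ball around a point `y` then meets the set where `f` is maximal in a single boundary point
`z`. Adding to `f` a small multiple of `x ↦ exp (-α * ‖x - y‖ ^ 2)`, which is strictly subharmonic
near `z` for large `α`, creates an interior local maximum of a strictly subharmonic function near
`z`, and this is impossible.
-/

open Filter Laplacian Metric Module Set Topology
open scoped RealInnerProductSpace

section LocalMaximum

lemma deriv_deriv_nonpos_of_isLocalMax {g : ℝ → ℝ} {t : ℝ} (hg : ContinuousAt g t)
    (hmax : IsLocalMax g t) : deriv (deriv g) t ≤ 0 := by
  by_contra! hpos
  have hmin : IsLocalMin g t := isLocalMin_of_deriv_deriv_pos hpos hmax.deriv_eq_zero hg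
  have hconst : g =ᶠ[𝓝 t] fun _ ↦ g t := by
    filter_upwards [hmax, hmin] with s hle hge using le_antisymm hle hge
  have hzero : deriv (deriv g) t = 0 := by simpa using hconst.deriv.deriv_eq
  exact hpos.ne' hzero

variable {E : Type*} [NormedAddCommGroup E] [NormedSpace ℝ E] {f : E → ℝ} {x : E}

lemma fderiv_fderiv_apply_nonpos_of_isLocalMax (hf : ContDiffAt ℝ 2 f x) (hmax : IsLocalMax f x)
    (v : E) : fderiv ℝ (fun y ↦ fderiv ℝ f y v) x v ≤ 0 := by
  have hline (t : ℝ) : HasDerivAt (fun t : ℝ ↦ x + t • v) v t := by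
    simpa using ((hasDerivAt_id t).smul_const v).const_add x
  have hlim : Tendsto (fun t : ℝ ↦ x + t • v) (𝓝 0) (𝓝 x) := by
    simpa using (hline 0).continuousAt.tendsto
  have hderiv : deriv (fun t : ℝ ↦ f (x + t • v)) =ᶠ[𝓝 0] fun t ↦ fderiv ℝ f (x + t • v) v := by
    filter_upwards [hlim.eventually (hf.eventually (by simp))] with t ht
    exact ((ht.differentiableAt (by simp)).hasFDerivAt.comp_hasDerivAt t (hline t)).deriv
  have hdiff : DifferentiableAt ℝ (fun y ↦ fderiv ℝ f y v) (x + (0 : ℝ) • v) := by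
    have : ContDiffAt ℝ 1 (fderiv ℝ f) x := hf.fderiv_right (by norm_num)
    simpa using (this.differentiableAt (by simp)).clm_apply (differentiableAt_const v)
  have hsecond : HasDerivAt (fun t : ℝ ↦ fderiv ℝ f (x + t • v) v)
      (fderiv ℝ (fun y ↦ fderiv ℝ f y v) (x + (0 : ℝ) • v) v) 0 :=
    hdiff.hasFDerivAt.comp_hasDerivAt (f := fun t : ℝ ↦ x + t • v) 0 (hline 0)
  calc fderiv ℝ (fun y ↦ fderiv ℝ f y v) x v
      = deriv (deriv fun t : ℝ ↦ f (x + t • v)) 0 := by simp [hderiv.deriv_eq, hsecond.deriv]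
    _ ≤ 0 := by
      refine deriv_deriv_nonpos_of_isLocalMax ?_ ?_
      · exact ContinuousAt.comp (by simpa using hf.continuousAt) (hline 0).continuousAt
      · simpa [IsLocalMax, IsMaxFilter] using hlim.eventually hmax

end LocalMaximum

section Laplacian

variable {E : Type*} [NormedAddCommGroup E] [InnerProductSpace ℝ E] [FiniteDimensional ℝ E]

lemma laplacian_apply_eq_sum_fderiv_fderiv {F ι : Type*} [NormedAddCommGroup F] [NormedSpace ℝ F]
    [Fintype ι] (b : OrthonormalBasis ι ℝ E) {f : E → F} {x : E} (hf : ContDiffAt ℝ 2 f x) :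
    Δ f x = ∑ i, fderiv ℝ (fun y ↦ fderiv ℝ f y (b i)) x (b i) := by
  have hdiff : DifferentiableAt ℝ (fderiv ℝ f) x :=
    (hf.fderiv_right (m := 1) (by norm_num)).differentiableAt (by simp)
  simp [InnerProductSpace.laplacian_eq_iteratedFDeriv_orthonormalBasis f b,
    iteratedFDeriv_two_apply, fderiv_clm_apply hdiff (differentiableAt_const _)]

lemma laplacian_nonpos_of_isLocalMax {f : E → ℝ} {x : E} (hf : ContDiffAt ℝ 2 f x)
    (hmax : IsLocalMax f x) : Δ f x ≤ 0 := by
  rw [laplacian_apply_eq_sum_fderiv_fderiv (stdOrthonormalBasis ℝ E) hf]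
  exact Finset.sum_nonpos fun i _ ↦ fderiv_fderiv_apply_nonpos_of_isLocalMax hf hmax _

lemma exists_mem_sphere_le_of_laplacian_pos {f : E → ℝ} {z : E} {r : ℝ} (hr : 0 ≤ r)
    (hcont : ContinuousOn f (closedBall z r)) (hf : ∀ x ∈ ball z r, ContDiffAt ℝ 2 f x)
    (hΔ : ∀ x ∈ ball z r, 0 < Δ f x) : ∃ x ∈ sphere z r, f z ≤ f x := by
  by_contra! hlt
  obtain ⟨x, hx, hmax⟩ := (isCompact_closedBall z r).exists_isLocalMax_mem_open
    ball_subset_closedBall hcont (mem_closedBall_self hr)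
    (by rwa [closedBall_sdiff_ball]) isOpen_ball
  exact (hΔ x hx).not_ge (laplacian_nonpos_of_isLocalMax (hf x hx) hmax)

end Laplacian

section HopfBarrier

variable {E : Type*} [NormedAddCommGroup E]

/-- The radial Gaussian around `y` with decay rate `α`, used as a barrier function: it decreases
away from `y`, and it is strictly subharmonic outside the ball of radius `√(dim E / (2 * α))`. -/
noncomputable def hopfBarrier (α : ℝ) (y x : E) : ℝ :=
  Real.exp (-α * ‖x - y‖ ^ 2)

lemma hopfBarrier_lt_hopfBarrier {α : ℝ} (hα : 0 < α) {x y z : E} (h : dist z y < dist x y) :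
    hopfBarrier α y x < hopfBarrier α y z := by
  rw [dist_eq_norm, dist_eq_norm] at h
  simp only [hopfBarrier, neg_mul]
  gcongr

variable [InnerProductSpace ℝ E]

lemma contDiff_hopfBarrier {n : WithTop ℕ∞} (α : ℝ) (y : E) : ContDiff ℝ n (hopfBarrier α y) :=
  (contDiff_const.mul ((contDiff_id.sub contDiff_const).norm_sq ℝ)).exp

lemma hasFDerivAt_hopfBarrier (α : ℝ) (x y : E) :
    HasFDerivAt (hopfBarrier α y) ((hopfBarrier α y x * (-2 * α)) • innerSL ℝ (x - y)) x := by
  have hsq : HasFDerivAt (fun x ↦ ‖x - y‖ ^ 2) (2 • innerSL ℝ (x - y)) x := by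
    simpa using ((hasFDerivAt_id x).sub_const y).norm_sq
  refine (hsq.const_mul (-α)).exp.congr_fderiv ?_
  rw [hopfBarrier]
  module

lemma fderiv_fderiv_hopfBarrier_apply (α : ℝ) (x y v : E) :
    fderiv ℝ (fun x ↦ fderiv ℝ (hopfBarrier α y) x v) x v
      = hopfBarrier α y x * (4 * α ^ 2 * ⟪x - y, v⟫ ^ 2 - 2 * α * ‖v‖ ^ 2) := by
  have hinner : HasFDerivAt (fun x ↦ ⟪x - y, v⟫) (innerSL ℝ v) x := by
    simp_rw [real_inner_comm]
    exact (innerSL ℝ v).hasFDerivAt.comp x ((hasFDerivAt_id x).sub_const y)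
  have hfirst : (fun x ↦ fderiv ℝ (hopfBarrier α y) x v)
      = fun x ↦ hopfBarrier α y x * (-2 * α) * ⟪x - y, v⟫ := by
    funext x
    simp [(hasFDerivAt_hopfBarrier α x y).fderiv, inner_sub_left]
  rw [hfirst, (((hasFDerivAt_hopfBarrier α x y).mul_const (-2 * α)).fun_mul hinner).fderiv]
  simp only [add_apply, smul_apply, innerSL_apply_apply, real_inner_self_eq_norm_sq, smul_eq_mul]
  ring

variable [FiniteDimensional ℝ E]

lemma laplacian_hopfBarrier (α : ℝ) (x y : E) :
    Δ (hopfBarrier α y) x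
      = hopfBarrier α y x * (4 * α ^ 2 * ‖x - y‖ ^ 2 - 2 * α * finrank ℝ E) := by
  simp [laplacian_apply_eq_sum_fderiv_fderiv (stdOrthonormalBasis ℝ E)
    (contDiff_hopfBarrier α y).contDiffAt, fderiv_fderiv_hopfBarrier_apply, ← Finset.mul_sum,
    OrthonormalBasis.sum_sq_inner_left, mul_comm]

lemma exists_pos_eventually_laplacian_hopfBarrier_pos {y z : E} (hyz : y ≠ z) :
    ∃ α > 0, ∀ᶠ x in 𝓝 z, 0 < Δ (hopfBarrier α y) x := by
  have hdist : 0 < ‖z - y‖ := norm_sub_pos_iff.2 hyz.symm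
  set α : ℝ := (finrank ℝ E + 1) / ‖z - y‖ ^ 2 with hα
  have hα_pos : 0 < α := by positivity
  have hα_large : 2 * α * finrank ℝ E < 4 * α ^ 2 * ‖z - y‖ ^ 2 := by
    have : α * ‖z - y‖ ^ 2 = finrank ℝ E + 1 := by rw [hα]; field_simp
    nlinarith
  have hcont : Continuous fun x ↦ 4 * α ^ 2 * ‖x - y‖ ^ 2 := by fun_prop
  refine ⟨α, hα_pos, ?_⟩
  filter_upwards [hcont.continuousAt.eventually_const_lt hα_large] with x hx
  rw [laplacian_hopfBarrier]
  exact mul_pos (Real.exp_pos _) (sub_pos.2 hx)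

end HopfBarrier

section TangentBall

variable {E : Type*} [NormedAddCommGroup E] [NormedSpace ℝ E] [StrictConvexSpace ℝ E]

lemma closedBall_midpoint_sdiff_singleton_subset_ball (y z : E) :
    closedBall (midpoint ℝ y z) (dist z (midpoint ℝ y z)) \ {z} ⊆ ball y (dist z y) := by
  rintro x ⟨hx, hxz⟩
  set m := midpoint ℝ y z with hm_def
  have hm : m - y = z - m := by
    rw [hm_def, midpoint_eq_smul_add, invOf_eq_inv]
    module
  rw [mem_closedBall, dist_eq_norm, dist_eq_norm] at hx
  rw [mem_ball, dist_eq_norm, dist_eq_norm]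
  have hzy : ‖z - y‖ = ‖z - m‖ + ‖z - m‖ := by
    rw [← sub_add_sub_cancel z m y, hm]
    exact SameRay.rfl.norm_add
  have hxy : x - y = (x - m) + (z - m) := by rw [← hm, sub_add_sub_cancel]
  rw [hzy, hxy]
  by_contra! hge
  have htri := norm_add_le (x - m) (z - m)
  have heq : x - m = z - m :=
    eq_of_norm_eq_of_norm_add_eq (by linarith) (by linarith)
  exact hxz (sub_left_injective heq)

lemma exists_closedBall_sdiff_singleton_subset [ProperSpace E] {U V : Set E} {x : E}
    (hU : U ∈ 𝓝 x) (hV : IsOpen V) (hx : x ∈ closure V) (hxV : x ∉ V) :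
    ∃ z ∈ U \ V, ∃ y ≠ z, closedBall y (dist z y) \ {z} ⊆ V := by
  obtain ⟨r, hr, hrU⟩ := Metric.mem_nhds_iff.1 hU
  obtain ⟨y, hyV, hxy⟩ := Metric.mem_closure_iff.1 hx (r / 2) (by positivity)
  obtain ⟨z, hzV, hyz⟩ := hV.isClosed_compl.exists_infDist_eq_dist ⟨x, hxV⟩ y
  have hzU : z ∈ U := by
    have : dist y z ≤ dist y x := hyz ▸ infDist_le_dist_of_mem hxV
    refine hrU (mem_ball.2 ?_)
    linarith [dist_triangle_left z x y, dist_comm x y]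
  have hne : y ≠ z := fun h ↦ hzV (h ▸ hyV)
  refine ⟨z, ⟨hzU, hzV⟩, midpoint ℝ y z, by simpa [midpoint_eq_right_iff] using hne, ?_⟩
  refine (closedBall_midpoint_sdiff_singleton_subset_ball y z).trans ?_
  rw [dist_comm, ← hyz]
  exact ball_infDist_compl_subset

end TangentBall

section StrongMaximumPrinciple

lemma exists_pos_forall_add_mul_neg_of_isCompact {X : Type*} [TopologicalSpace X] {K : Set X}
    (hK : IsCompact K) {g w : X → ℝ} (hg : ContinuousOn g K) (hw : ContinuousOn w K)
    (hg_nonpos : ∀ x ∈ K, g x ≤ 0) (hneg : ∀ x ∈ K, g x < 0 ∨ w x < 0) :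
    ∃ ε > 0, ∀ x ∈ K, g x + ε * w x < 0 := by
  obtain ⟨δ, hδ, hle⟩ : ∃ δ > 0, ∀ x ∈ K, δ ≤ -(g x ⊓ w x) :=
    hK.exists_forall_le' (hg.inf hw).neg fun x hx ↦ neg_pos.2 (inf_lt_iff.2 (hneg x hx))
  obtain ⟨C, hC⟩ := hK.exists_bound_of_continuousOn hw
  have hε : 0 < δ / (|C| + 1) := by positivity
  refine ⟨δ / (|C| + 1), hε, fun x hx ↦ ?_⟩
  rcases inf_le_iff.1 (le_neg_of_le_neg (hle x hx)) with hgδ | hwδ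
  · calc g x + δ / (|C| + 1) * w x ≤ -δ + δ / (|C| + 1) * |C| := by
          gcongr
          exact (le_abs_self _).trans ((hC x hx).trans (le_abs_self C))
      _ < -δ + δ / (|C| + 1) * (|C| + 1) := by gcongr; exact lt_add_one _
      _ = 0 := by field_simp; ring
  · have hwx : w x < 0 := hwδ.trans_lt (neg_neg_of_pos hδ)
    exact add_neg_of_nonpos_of_neg (hg_nonpos x hx) (mul_neg_of_pos_of_neg hε hwx)

variable {E : Type*} [NormedAddCommGroup E] [InnerProductSpace ℝ E] [FiniteDimensional ℝ E]
  {f : E → ℝ}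

lemma not_isLocalMax_of_laplacian_nonneg {y z : E} (hyz : y ≠ z)
    (hf : ∀ᶠ x in 𝓝 z, ContDiffAt ℝ 2 f x) (hΔ : ∀ᶠ x in 𝓝 z, 0 ≤ Δ f x)
    (hlt : ∀ x ∈ closedBall y (dist z y) \ {z}, f x < f z) : ¬IsLocalMax f z := by
  intro hmax
  obtain ⟨α, hα, hw⟩ := exists_pos_eventually_laplacian_hopfBarrier_pos hyz
  set w := hopfBarrier α y
  obtain ⟨r, hr, hball⟩ := nhds_basis_closedBall.eventually_iff.1
    (hf.and (hΔ.and (hmax.and hw)))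
  have hw_smooth : ContDiff ℝ 2 w := contDiff_hopfBarrier α y
  have hf_cont : ContinuousOn f (closedBall z r) := fun x hx ↦
    (hball hx).1.continuousAt.continuousWithinAt
  obtain ⟨ε, hε, hsphere⟩ : ∃ ε > 0, ∀ x ∈ sphere z r, f x - f z + ε * (w x - w z) < 0 := by
    refine exists_pos_forall_add_mul_neg_of_isCompact (isCompact_sphere z r)
      ((hf_cont.mono sphere_subset_closedBall).sub continuousOn_const)
      (hw_smooth.continuous.continuousOn.sub continuousOn_const)
      (fun x hx ↦ sub_nonpos.2 (hball (sphere_subset_closedBall hx)).2.2.1) fun x hx ↦ ?_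
    simp only [sub_neg]
    rcases le_or_gt (dist x y) (dist z y) with hle | hgt
    · exact .inl (hlt x ⟨hle, ne_of_mem_sphere hx hr.ne'⟩)
    · exact .inr (hopfBarrier_lt_hopfBarrier hα hgt)
  obtain ⟨x, hx, hle⟩ := exists_mem_sphere_le_of_laplacian_pos (f := f + ε • w) hr.le
    (hf_cont.add (hw_smooth.continuous.continuousOn.const_smul ε))
    (fun x hx ↦ (hball (ball_subset_closedBall hx)).1.add (hw_smooth.contDiffAt.const_smul ε))
    (fun x hx ↦ by
      obtain ⟨hfx, hΔx, -, hwx⟩ := hball (ball_subset_closedBall hx)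
      rw [hfx.laplacian_add (f₂ := ε • w) (hw_smooth.contDiffAt.const_smul ε),
        InnerProductSpace.laplacian_smul ε hw_smooth.contDiffAt]
      exact add_pos_of_nonneg_of_pos hΔx (mul_pos hε hwx))
  simp only [Pi.add_apply, Pi.smul_apply, smul_eq_mul] at hle
  linarith [hsphere x hx]

theorem eqOn_of_isPreconnected_of_isMaxOn_of_laplacian_nonneg {U : Set E} {p : E}
    (hU : IsOpen U) (hconn : IsPreconnected U) (hf : ContDiffOn ℝ 2 f U)
    (hΔ : ∀ x ∈ U, 0 ≤ Δ f x) (hp : p ∈ U) (hmax : IsMaxOn f U p) :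
    EqOn f (fun _ ↦ f p) U := by
  set V : Set E := {x ∈ U | f x < f p}
  have hV : IsOpen V := hf.continuousOn.isOpen_inter_preimage hU isOpen_Iio
  have hclosure : closure V ∩ U ⊆ V := by
    rintro x ⟨hxV, hxU⟩
    by_contra hx
    obtain ⟨z, ⟨hzU, hzV⟩, y, hyz, hball⟩ :=
      exists_closedBall_sdiff_singleton_subset (hU.mem_nhds hxU) hV hxV hx
    have hfz : f z = f p := (hmax hzU).antisymm (not_lt.1 fun h ↦ hzV ⟨hzU, h⟩)
    have hU_nhds : ∀ᶠ x in 𝓝 z, x ∈ U := hU.mem_nhds hzU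
    refine not_isLocalMax_of_laplacian_nonneg hyz
      (hU_nhds.mono fun x hx ↦ hf.contDiffAt (hU.mem_nhds hx)) (hU_nhds.mono hΔ)
      (fun x hx ↦ (hball hx).2.trans_eq hfz.symm) (hU_nhds.mono fun x hx ↦ ?_)
    exact (hmax hx).trans_eq hfz.symm
  intro x hx
  by_contra hne
  have hVU : U ⊆ V :=
    hconn.subset_of_closure_inter_subset hV ⟨x, hx, hx, lt_of_le_of_ne (hmax hx) hne⟩ hclosure
  exact (hVU hp).2.false

end StrongMaximumPrinciple

lemma exists_isMaxOn_compl_zero_of_homogeneous {E β : Type*} [NormedAddCommGroup E]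
    [NormedSpace ℝ E] [ProperSpace E] [Nontrivial E] [LinearOrder β] [TopologicalSpace β]
    [ClosedIciTopology β] {f : E → β} (hf : ContinuousOn f {0}ᶜ)
    (hhom : ∀ t : ℝ, 0 < t → ∀ x : E, x ≠ 0 → f (t • x) = f x) :
    ∃ p ≠ 0, IsMaxOn f {0}ᶜ p := by
  obtain ⟨p, hp, hmax⟩ := (isCompact_sphere (0 : E) 1).exists_isMaxOn
    (NormedSpace.sphere_nonempty.2 zero_le_one)
    (hf.mono fun x hx ↦ ne_of_mem_sphere hx one_ne_zero)
  refine ⟨p, ne_of_mem_sphere hp one_ne_zero, fun x hx ↦ ?_⟩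
  have hunit : ‖x‖⁻¹ • x ∈ sphere (0 : E) 1 := by
    simpa using norm_smul_inv_norm (𝕜 := ℝ) hx
  calc f x = f (‖x‖⁻¹ • x) := (hhom _ (inv_pos.2 (norm_pos_iff.2 hx)) x hx).symm
    _ ≤ f p := hmax hunit

theorem degree_zero_homogeneous_harmonic_is_constant_general {E : Type*} [NormedAddCommGroup E]
    [InnerProductSpace ℝ E] [FiniteDimensional ℝ E] (hdim : 1 < finrank ℝ E) {f : E → ℝ}
    (hf : ContDiffOn ℝ 2 f {0}ᶜ)
    (hhom : ∀ t : ℝ, 0 < t → ∀ x : E, x ≠ 0 → f (t • x) = f x)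
    (hsub : ∀ x : E, x ≠ 0 → 0 ≤ Δ f x) {x y : E} (hx : x ≠ 0) (hy : y ≠ 0) : f x = f y := by
  have : Nontrivial E := nontrivial_of_finrank_pos (zero_lt_one.trans hdim)
  have hconn : IsConnected ({0}ᶜ : Set E) :=
    isConnected_compl_singleton_of_one_lt_rank (one_lt_rank_of_one_lt_finrank hdim) 0
  obtain ⟨p, hp, hmax⟩ := exists_isMaxOn_compl_zero_of_homogeneous hf.continuousOn hhom
  have hconst := eqOn_of_isPreconnected_of_isMaxOn_of_laplacian_nonneg
    isOpen_compl_singleton hconn.isPreconnected hf hsub hp hmax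
  exact (hconst hx).trans (hconst hy).symm

lemma laplacian_apply_eq_lap {f : EuclideanSpace ℝ (Fin 3) → ℝ} {x : EuclideanSpace ℝ (Fin 3)}
    (hf : ContDiffAt ℝ 2 f x) : Δ f x = lap f x := by
  simp [laplacian_apply_eq_sum_fderiv_fderiv (EuclideanSpace.basisFun (Fin 3) ℝ) hf, lap]

/-- A function on `ℝ³` that is smooth away from the origin, homogeneous of degree zero,
and harmonic away from the origin, is constant (on the complement of the origin). -/
theorem degree_zero_homogeneous_harmonic_is_constant
    (f : EuclideanSpace ℝ (Fin 3) → ℝ)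
    (hf : ContDiffOn ℝ (⊤ : ℕ∞) f {(0 : EuclideanSpace ℝ (Fin 3))}ᶜ)
    (hhom : ∀ t : ℝ, 0 < t → ∀ x : EuclideanSpace ℝ (Fin 3), x ≠ 0 → f (t • x) = f x)
    (hharm : ∀ x : EuclideanSpace ℝ (Fin 3), x ≠ 0 → lap f x = 0) :
    ∀ x y : EuclideanSpace ℝ (Fin 3), x ≠ 0 → y ≠ 0 → f x = f y := by
  have hf₂ : ContDiffOn ℝ 2 f {0}ᶜ := hf.of_le (by norm_cast)
  have hsub (x : EuclideanSpace ℝ (Fin 3)) (hx : x ≠ 0) : 0 ≤ Δ f x := by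
    rw [laplacian_apply_eq_lap (hf₂.contDiffAt (isOpen_compl_singleton.mem_nhds hx)), hharm x hx]
  exact fun x y hx hy ↦
    degree_zero_homogeneous_harmonic_is_constant_general (by simp) hf₂ hhom hsub hx hy
end
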